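/- Let A ∈ ℂ^{n×n}, B ∈ ℂ^{n×1}, C ∈ ℂ^{1×n}, and let q_1, …, q_ν, s_1, …, s_ν ∈ ℂ, none of which is an eigenvalue of A. Let Υ ∈ ℂ^{ν×n} be the matrix whose i-th row is C(q_i I − A)^{-1} and Π ∈ ℂ^{n×ν} the matrix whose j-th column is (s_j I − A)^{-1}B. Define σ𝕃 ∈ ℂ^{ν×ν} entrywise by σ𝕃_{ij} = (q_i K(q_i) − s_j K(s_j))/(q_i − s_j) whenever q_i ≠ s_j, and σ𝕃_{ij} = −C A (s_j I − A)^{-2}B (which equals the derivative of s ↦ sK(s) at s_j) whenever q_i = s_j, with K(s) = C(sI − A)^{-1}B. Then σ𝕃 = −Υ A Π. -/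

import Mathlib

open Matrix

/-!
For `a` in an algebra, with `x = (q - a)⁻¹` and `y = (s - a)⁻¹`, inserting `(s - a) y = 1` and
`x (q - a) = 1` gives `q x - s y = x (q (s - a) - s (q - a)) y = -(q - s) x a y`. Sandwiched
between `C` and `B`, this is the identity for an entry with `qᵢ ≠ s_j`; where the points
coincide, it only uses that `a` commutes with its resolvent.
-/

section Resolvent

variable {R 𝔸 : Type*} [CommRing R] [Ring 𝔸] [Algebra R 𝔸]

theorem commute_resolvent (a : 𝔸) (r : R) : Commute a (resolvent a r) := by
  have commute_sub : Commute a (algebraMap R 𝔸 r - a) :=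
    .sub_right (Algebra.commute_algebraMap_right r a) (.refl a)
  rw [resolvent]
  by_cases hr : IsUnit (algebraMap R 𝔸 r - a)
  · obtain ⟨u, hu⟩ := hr
    rw [← hu] at commute_sub ⊢
    simpa only [Ring.inverse_unit] using commute_sub.units_inv_right
  · rw [Ring.inverse_non_unit _ hr]
    exact .zero_right a

theorem smul_resolvent_sub_smul_resolvent {a : 𝔸} {q s : R}
    (hq : q ∈ resolventSet R a) (hs : s ∈ resolventSet R a) :
    q • resolvent a q - s • resolvent a s =
      -((q - s) • (resolvent a q * a * resolvent a s)) := by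
  have left_inv : resolvent a q * (algebraMap R 𝔸 q - a) = 1 := Ring.inverse_mul_cancel _ hq
  have right_inv : (algebraMap R 𝔸 s - a) * resolvent a s = 1 := Ring.mul_inverse_cancel _ hs
  calc
    q • resolvent a q - s • resolvent a s
      = q • (resolvent a q * ((algebraMap R 𝔸 s - a) * resolvent a s)) -
          s • (resolvent a q * (algebraMap R 𝔸 q - a) * resolvent a s) := by
        rw [left_inv, right_inv, mul_one, one_mul]
    _ = -((q - s) • (resolvent a q * a * resolvent a s)) := by
        simp only [Algebra.algebraMap_eq_smul_one, mul_sub, sub_mul, mul_smul_comm,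
          smul_mul_assoc, one_mul, mul_one, mul_assoc]
        module

theorem resolvent_eq_nonsing_inv {n : Type*} [Fintype n] [DecidableEq n] (A : Matrix n n R)
    (r : R) : resolvent A r = (r • (1 : Matrix n n R) - A)⁻¹ := by
  rw [resolvent, Algebra.algebraMap_eq_smul_one, nonsing_inv_eq_ringInverse]

theorem mem_resolventSet_iff_isUnit_smul_one_sub {a : 𝔸} {r : R} :
    r ∈ resolventSet R a ↔ IsUnit (r • (1 : 𝔸) - a) := by
  rw [spectrum.mem_resolventSet_iff, Algebra.algebraMap_eq_smul_one]

end Resolvent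

section Loewner

variable {𝕜 n ι κ : Type*} [Field 𝕜] [Fintype n] [DecidableEq n]

/-- The transfer matrix `K(z) = C(zI − A)⁻¹B` of the linear system `ẋ = Ax + Bu`, `y = Cx`;
at the eigenvalues of `A` it takes the junk value `0` of `resolvent`. -/
noncomputable def transferMatrix (A : Matrix n n 𝕜) (B : Matrix n κ 𝕜) (C : Matrix ι n 𝕜)
    (z : 𝕜) : Matrix ι κ 𝕜 :=
  C * resolvent A z * B

/-- The generalized observability matrix `Υ`, with rows `cᵢ(qᵢI − A)⁻¹`. The row `cᵢ` of `C` is the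
output functional probed at `qᵢ`: in tangential interpolation it is the output matrix contracted
with the `i`-th left direction, and for a single output all rows of `C` are equal. -/
noncomputable def generalizedObservability (A : Matrix n n 𝕜) (C : Matrix ι n 𝕜) (q : ι → 𝕜) :
    Matrix ι n 𝕜 :=
  of fun i k => (C * resolvent A (q i)) i k

/-- The generalized controllability matrix `Π`, with columns `(s_jI − A)⁻¹b_j`. The column `b_j` of
`B` is the input vector used at `s_j`: the input matrix applied to the `j`-th right direction, so
that all columns of `B` are equal for a single input. -/
noncomputable def generalizedControllability (A : Matrix n n 𝕜) (B : Matrix n κ 𝕜) (s : κ → 𝕜) :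
    Matrix n κ 𝕜 :=
  of fun k j => (resolvent A (s j) * B) k j

/-- The shifted Loewner matrix `σ𝕃` of the data `qᵢK(qᵢ)` and `s_jK(s_j)`. Its `(i, j)` entry only
sees the `(i, j)` entry of `K`, since the rows of `C` and the columns of `B` carry the
interpolation directions. Where `qᵢ = s_j`, the divided difference of `z ↦ zK(z)` is replaced by
the derivative, written out as `−CA(s_jI − A)⁻²B`. -/
noncomputable def shiftedLoewner [DecidableEq 𝕜] (A : Matrix n n 𝕜) (B : Matrix n κ 𝕜)
    (C : Matrix ι n 𝕜) (q : ι → 𝕜) (s : κ → 𝕜) : Matrix ι κ 𝕜 :=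
  of fun i j =>
    if q i = s j then
      (-(C * A * (resolvent A (s j) * resolvent A (s j)) * B)) i j
    else
      (q i * transferMatrix A B C (q i) i j - s j * transferMatrix A B C (s j) i j) / (q i - s j)

variable {A : Matrix n n 𝕜}

theorem smul_transferMatrix_sub_smul_transferMatrix (B : Matrix n κ 𝕜) (C : Matrix ι n 𝕜)
    {q s : 𝕜} (hq : q ∈ resolventSet 𝕜 A) (hs : s ∈ resolventSet 𝕜 A) :
    q • transferMatrix A B C q - s • transferMatrix A B C s =
      -((q - s) • (C * (resolvent A q * A * resolvent A s) * B)) := by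
  simpa only [transferMatrix, Matrix.mul_sub, Matrix.sub_mul, Matrix.mul_smul, Matrix.smul_mul,
    Matrix.mul_neg, Matrix.neg_mul] using
    congrArg (fun M => C * M * B) (smul_resolvent_sub_smul_resolvent hq hs)

theorem shiftedLoewner_apply [DecidableEq 𝕜] (B : Matrix n κ 𝕜) (C : Matrix ι n 𝕜)
    {q : ι → 𝕜} {s : κ → 𝕜} {i : ι} {j : κ}
    (hq : q i ∈ resolventSet 𝕜 A) (hs : s j ∈ resolventSet 𝕜 A) :
    shiftedLoewner A B C q s i j =
      -(C * (resolvent A (q i) * A * resolvent A (s j)) * B) i j := by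
  rw [shiftedLoewner, of_apply]
  split_ifs with h
  · rw [h, Matrix.neg_apply, Matrix.mul_assoc C A, ← Matrix.mul_assoc A,
      (commute_resolvent A (s j)).eq]
  · rw [div_eq_iff (sub_ne_zero.mpr h)]
    have entry := Matrix.ext_iff.mpr (smul_transferMatrix_sub_smul_transferMatrix B C hq hs) i j
    simp only [Matrix.sub_apply, Matrix.neg_apply, Matrix.smul_apply, smul_eq_mul] at entry
    rw [entry, neg_mul, mul_comm]

theorem generalizedObservability_mul_mul_generalizedControllability_apply
    (B : Matrix n κ 𝕜) (C : Matrix ι n 𝕜) (q : ι → 𝕜) (s : κ → 𝕜) (i : ι) (j : κ) :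
    (generalizedObservability A C q * A * generalizedControllability A B s) i j =
      (C * (resolvent A (q i) * A * resolvent A (s j)) * B) i j := by
  calc
    (generalizedObservability A C q * A * generalizedControllability A B s) i j
      = (C * resolvent A (q i) * A * (resolvent A (s j) * B)) i j := rfl
    _ = (C * (resolvent A (q i) * A * resolvent A (s j)) * B) i j := by
        simp only [Matrix.mul_assoc]

theorem stmt_11_general [DecidableEq 𝕜] (A : Matrix n n 𝕜) (B : Matrix n κ 𝕜)
    (C : Matrix ι n 𝕜) (q : ι → 𝕜) (s : κ → 𝕜)
    (hq : ∀ i, q i ∈ resolventSet 𝕜 A) (hs : ∀ j, s j ∈ resolventSet 𝕜 A) :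
    shiftedLoewner A B C q s =
      -(generalizedObservability A C q * A * generalizedControllability A B s) := by
  ext i j
  rw [shiftedLoewner_apply B C (hq i) (hs j), Matrix.neg_apply,
    generalizedObservability_mul_mul_generalizedControllability_apply]

end Loewner

/-- The shifted Loewner matrix built from the data, with entries
`(qᵢK(qᵢ) − s_jK(s_j))/(qᵢ − s_j)` when `qᵢ ≠ s_j` and `−CA(s_jI − A)⁻²B`
(the derivative of `s ↦ sK(s)` at `s_j`) when `qᵢ = s_j`, equals `−ΥAΠ`,
where the `i`-th row of `Υ` is `C(qᵢI − A)⁻¹` and the `j`-th column of `Π`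
is `(s_jI − A)⁻¹B`. -/
theorem stmt_11 {n ν : ℕ}
    (A : Matrix (Fin n) (Fin n) ℂ) (B : Matrix (Fin n) (Fin 1) ℂ)
    (C : Matrix (Fin 1) (Fin n) ℂ)
    (q s : Fin ν → ℂ)
    (hq : ∀ i, IsUnit (q i • (1 : Matrix (Fin n) (Fin n) ℂ) - A))
    (hs : ∀ j, IsUnit (s j • (1 : Matrix (Fin n) (Fin n) ℂ) - A))
    (Υ : Matrix (Fin ν) (Fin n) ℂ)
    (hΥ : ∀ i j, Υ i j = (C * (q i • (1 : Matrix (Fin n) (Fin n) ℂ) - A)⁻¹) 0 j)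
    (Pm : Matrix (Fin n) (Fin ν) ℂ)
    (hPm : ∀ i j, Pm i j = ((s j • (1 : Matrix (Fin n) (Fin n) ℂ) - A)⁻¹ * B) i 0)
    (σ𝕃 : Matrix (Fin ν) (Fin ν) ℂ)
    (hσ𝕃 : ∀ i j, σ𝕃 i j =
      if q i = s j then
        (-(C * A * ((s j • (1 : Matrix (Fin n) (Fin n) ℂ) - A)⁻¹
            * (s j • (1 : Matrix (Fin n) (Fin n) ℂ) - A)⁻¹) * B)) 0 0
      else
        (q i * (C * (q i • (1 : Matrix (Fin n) (Fin n) ℂ) - A)⁻¹ * B) 0 0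
          - s j * (C * (s j • (1 : Matrix (Fin n) (Fin n) ℂ) - A)⁻¹ * B) 0 0)
          / (q i - s j)) :
    σ𝕃 = -(Υ * A * Pm) := by
  simp only [← resolvent_eq_nonsing_inv, ← mem_resolventSet_iff_isUnit_smul_one_sub]
    at hq hs hΥ hPm hσ𝕃
  -- The same output row is probed at every `qᵢ`, the same input column used at every `s_j`.
  convert
    stmt_11_general A (B.submatrix id fun _ => 0) (C.submatrix (fun _ => 0) id) q s hq hs
  exacts [ext hσ𝕃, ext hΥ, ext hPm]
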